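/- arXiv:1603.08074 — 6 statements merged into one kernel-verified Lean document; each statement's English description precedes it below -/
import Mathlib

section
/- Let d ≥ 1 and let a = (a_0, …, a_{d+1}) ∈ ℤ^{d+2} be balanced nonzero. Then a point z ∈ U is a critical point of the restriction of the circuit potential W to U — i.e. the complex Fréchet derivative of W at z vanishes identically on the subspace T — if and only if z_i = a_i / a_{d+1} for every 0 ≤ i ≤ d. Moreover, at this unique critical point, W(z) = ∏_{i=0}^{d+1} a_i^{a_i}, where each factor a_i^{a_i} is the integer power (zpow) of the complex number a_i. -/
/-!
The logarithmic derivative of `W = ∏ i, z i ^ b i` at `z` is `v ↦ ∑ i, b i / z i * v i`, and a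
covector vanishes on the hyperplane `∑ i, v i = 0` exactly when its coefficients all agree. So `z`
is critical iff it is proportional to `b`, and comparing coordinate sums fixes the ratio to be
`(∑ i, z i) / ∑ i, b i`. The critical value follows because `W` is homogeneous of degree
`∑ i, b i`. In the balanced case this degree is `-a (d + 1)` and `∑ i, z i = -1`, so the ratio is
`1 / a (d + 1)` and homogeneity contributes the missing factor `a (d + 1) ^ a (d + 1)`.
-/

theorem prod_zpow_eq_zpow_sum₀ {ι G₀ : Type*} [CommGroupWithZero G₀] {t : G₀} (ht : t ≠ 0)
    (s : Finset ι) (n : ι → ℤ) : ∏ i ∈ s, t ^ n i = t ^ ∑ i ∈ s, n i := by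
  induction s using Finset.cons_induction with
  | empty => simp
  | cons i s hi ih => rw [Finset.sum_cons, Finset.prod_cons, zpow_add₀ ht, ih]

variable {ι : Type*} [Fintype ι]

theorem forall_sum_mul_eq_zero_iff_exists_forall_eq {R : Type*} [Ring R] (w : ι → R) :
    (∀ v : ι → R, ∑ i, v i = 0 → ∑ i, w i * v i = 0) ↔ ∃ k, ∀ i, w i = k := by
  classical
  constructor
  · intro h
    rcases isEmpty_or_nonempty ι with _ | ⟨⟨j⟩⟩
    · exact ⟨0, isEmptyElim⟩
    · refine ⟨w j, fun i ↦ sub_eq_zero.mp ?_⟩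
      have hij := h (Pi.single i 1 - Pi.single j 1) (by simp)
      simpa only [Pi.sub_apply, mul_sub, Finset.sum_sub_distrib, Pi.single_apply, mul_ite, mul_one,
        mul_zero, Finset.sum_ite_eq', Finset.mem_univ, if_true] using hij
  · rintro ⟨k, hk⟩ v hv
    simp only [hk, ← Finset.mul_sum, hv, mul_zero]

section Field

variable {K : Type*} [Field K]

theorem exists_forall_div_eq_iff_eq_sum_div_sum_mul {w z : ι → K} (hw : ∑ i, w i ≠ 0)
    (hz : ∀ i, z i ≠ 0) :
    (∃ k, ∀ i, w i / z i = k) ↔ ∀ i, z i = (∑ j, z j) / (∑ j, w j) * w i := by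
  constructor
  · rintro ⟨k, hk⟩ i
    have hwz : ∀ j, w j = k * z j := fun j ↦ (div_eq_iff (hz j)).mp (hk j)
    have hsum : ∑ j, w j = k * ∑ j, z j := by simp only [hwz, Finset.mul_sum]
    rw [div_mul_eq_mul_div, eq_div_iff hw, hsum, hwz i]
    ring
  · intro h
    refine ⟨((∑ j, z j) / ∑ j, w j)⁻¹, fun i ↦ ?_⟩
    have hratio : (∑ j, z j) / (∑ j, w j) * w i ≠ 0 := h i ▸ hz i
    rw [h i, div_mul_cancel_right₀ (right_ne_zero_of_mul hratio)]

/-- The circuit potential in an affine chart: the last homogeneous coordinate is normalized to a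
constant, so its exponent does not occur in `b`. Off the torus it takes the junk values of `zpow`
at `0`. -/
def circuitPotential (b : ι → ℤ) (z : ι → K) : K :=
  ∏ i, z i ^ b i

theorem circuitPotential_ne_zero (b : ι → ℤ) {z : ι → K} (hz : ∀ i, z i ≠ 0) :
    circuitPotential b z ≠ 0 :=
  Finset.prod_ne_zero_iff.mpr fun i _ ↦ zpow_ne_zero _ (hz i)

theorem circuitPotential_smul (b : ι → ℤ) {t : K} (ht : t ≠ 0) (z : ι → K) :
    circuitPotential b (t • z) = t ^ (∑ i, b i) * circuitPotential b z := by
  simp only [circuitPotential, Pi.smul_apply, smul_eq_mul, mul_zpow, Finset.prod_mul_distrib,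
    prod_zpow_eq_zpow_sum₀ ht]

end Field

section Calculus

variable {𝕜 : Type*} [NontriviallyNormedField 𝕜]

theorem fderiv_circuitPotential_apply (b : ι → ℤ) {z : ι → 𝕜} (hz : ∀ i, z i ≠ 0)
    (v : ι → 𝕜) :
    fderiv 𝕜 (circuitPotential b) z v = circuitPotential b z * ∑ i, b i / z i * v i := by
  classical
  have hfactor (i : ι) : HasFDerivAt (fun x : ι → 𝕜 ↦ x i ^ b i)
      ((b i * z i ^ (b i - 1)) • ContinuousLinearMap.proj (R := 𝕜) (φ := fun _ : ι ↦ 𝕜) i) z :=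
    (hasDerivAt_zpow (b i) (z i) (.inl (hz i))).comp_hasFDerivAt z (hasFDerivAt_apply i z)
  have hprod : HasFDerivAt (circuitPotential b) _ z :=
    HasFDerivAt.finsetProd fun i (_ : i ∈ Finset.univ) ↦ hfactor i
  simp only [hprod.fderiv, sum_apply, smul_apply, ContinuousLinearMap.proj_apply, smul_eq_mul,
    Finset.mul_sum]
  refine Finset.sum_congr rfl fun i hi ↦ ?_
  rw [circuitPotential, ← Finset.mul_prod_erase _ _ hi, zpow_sub_one₀ (hz i)]
  ring

theorem forall_fderiv_circuitPotential_eq_zero_iff (b : ι → ℤ) {z : ι → 𝕜} (hz : ∀ i, z i ≠ 0) :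
    (∀ v : ι → 𝕜, ∑ i, v i = 0 → fderiv 𝕜 (circuitPotential b) z v = 0) ↔
      ∃ k : 𝕜, ∀ i, b i / z i = k := by
  simp only [fderiv_circuitPotential_apply b hz, mul_eq_zero, circuitPotential_ne_zero b hz,
    false_or, forall_sum_mul_eq_zero_iff_exists_forall_eq]

theorem statement0_general (b : ι → ℤ) (hb : ((∑ i, b i : ℤ) : 𝕜) ≠ 0)
    {z : ι → 𝕜} (hz : ∀ i, z i ≠ 0) :
    ((∀ v : ι → 𝕜, ∑ i, v i = 0 → fderiv 𝕜 (circuitPotential b) z v = 0) ↔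
      ∀ i, z i = (∑ j, z j) / (∑ j, b j : ℤ) * b i) ∧
    ((∀ i, z i = (∑ j, z j) / (∑ j, b j : ℤ) * b i) →
      circuitPotential b z =
        ((∑ j, z j) / (∑ j, b j : ℤ)) ^ (∑ j, b j) * ∏ i, (b i : 𝕜) ^ b i) := by
  rw [Int.cast_sum] at hb ⊢
  refine ⟨(forall_fderiv_circuitPotential_eq_zero_iff b hz).trans
    (exists_forall_div_eq_iff_eq_sum_div_sum_mul hb hz),
    fun h ↦ ?_⟩
  obtain ⟨i, -, -⟩ := Finset.exists_ne_zero_of_sum_ne_zero hb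
  have hratio : (∑ j, z j) / ∑ j, (b j : 𝕜) ≠ 0 := left_ne_zero_of_mul (h i ▸ hz i)
  calc circuitPotential b z
      = circuitPotential b (((∑ j, z j) / ∑ j, (b j : 𝕜)) • fun j ↦ (b j : 𝕜)) :=
        congrArg _ (funext h)
    _ = _ := circuitPotential_smul b hratio _

end Calculus

/-- For a balanced nonzero `a ∈ ℤ^{d+2}` (`d ≥ 1`), a point `z` of the
affine chart `U = {z ∈ ℂ^{d+1} : z i ≠ 0, ∑ z i = -1}` of the `d`-dimensional pair of pants
is a critical point of the circuit potential `W z = ∏ i, z i ^ a i` (i.e. the complex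
Fréchet derivative of `W` at `z` vanishes on the direction subspace
`T = {v : ∑ v i = 0}`) iff `z i = a i / a (d+1)` for all `i`; moreover at that point
`W z = ∏_{i=0}^{d+1} (a i : ℂ) ^ (a i)` (zpow). -/
theorem statement0 (d : ℕ) (hd : 1 ≤ d) (a : Fin (d + 2) → ℤ)
    (hne : ∀ i, a i ≠ 0) (hbal : ∑ i, a i = 0)
    (W : (Fin (d + 1) → ℂ) → ℂ)
    (hW : W = fun z => ∏ i : Fin (d + 1), z i ^ a i.castSucc)
    (z : Fin (d + 1) → ℂ) (hz0 : ∀ i, z i ≠ 0) (hzs : ∑ i, z i = -1) :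
    ((∀ v : Fin (d + 1) → ℂ, ∑ i, v i = 0 → fderiv ℂ W z v = 0) ↔
      ∀ i : Fin (d + 1), z i = (a i.castSucc : ℂ) / (a (Fin.last (d + 1)) : ℂ)) ∧
    ((∀ i : Fin (d + 1), z i = (a i.castSucc : ℂ) / (a (Fin.last (d + 1)) : ℂ)) →
      W z = ∏ i : Fin (d + 2), (a i : ℂ) ^ a i) := by
  obtain rfl : W = circuitPotential fun i ↦ a i.castSucc := hW
  have hsum : ∑ i : Fin (d + 1), a i.castSucc = -a (Fin.last (d + 1)) :=
    eq_neg_of_add_eq_zero_left (Fin.sum_univ_castSucc a ▸ hbal)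
  rw [Fin.prod_univ_castSucc]
  simpa [hsum, hzs, div_eq_inv_mul, mul_comm] using
    statement0_general (fun i : Fin (d + 1) ↦ a i.castSucc) (by simp [hsum, hne]) hz0
end

section
/- Let d ≥ 1 and let a = (a_0, …, a_{d+1}) ∈ ℤ^{d+2} be balanced nonzero, and let z* ∈ U be the point with coordinates z*_i = a_i / a_{d+1} for 0 ≤ i ≤ d. Then the second complex Fréchet derivative D²W(z*), viewed as a symmetric bilinear form on T × T, is nondegenerate: for every nonzero v ∈ T there exists w ∈ T with D²W(z*)(v, w) ≠ 0. (In other words, the unique critical point of W restricted to U is a nondegenerate (Morse) critical point.) -/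
/-!
Write `η = ∑ bᵢ dzᵢ / zᵢ` for the logarithmic derivative of a Laurent monomial `W = ∏ zᵢ ^ bᵢ`.
Then `DW = W η` and `D²W = W (η ⊗ η + Dη)`. At `z = b / c` the form `η` is `c ∑ dzᵢ`, which vanishes
on the hyperplane `T = {∑ vᵢ = 0}`, so there `D²W` is a nonzero multiple of the diagonal form
`∑ vᵢ wᵢ / bᵢ`. The orthogonal complement of `T` for the latter is spanned by `b`, and `b ∉ T`.
-/

open Filter Topology ContinuousLinearMap

theorem exists_sum_eq_zero_and_sum_mul_div_ne_zero {ι K : Type*} [Fintype ι] [Field K]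
    {b v : ι → K} (hb : ∀ i, b i ≠ 0) (hsum : ∑ i, b i ≠ 0) (hv : ∑ i, v i = 0) (hv0 : v ≠ 0) :
    ∃ w : ι → K, ∑ i, w i = 0 ∧ ∑ i, v i * w i / b i ≠ 0 := by
  classical
  obtain ⟨j, hj⟩ := Function.ne_iff.1 hv0
  -- The projection of the `j`-th basis vector to the hyperplane along its orthogonal vector `b`.
  let w : ι → K := Pi.single j 1 - (∑ i, b i)⁻¹ • b
  have hw : ∑ i, w i = 0 := by
    simp [w, Finset.sum_sub_distrib, ← Finset.mul_sum, hsum]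
  have hterm (i : ι) :
      v i * w i / b i = v i / b i * Pi.single (M := fun _ => K) j 1 i - (∑ k, b k)⁻¹ * v i := by
    have hbi := hb i
    simp only [w, Pi.sub_apply, Pi.smul_apply, smul_eq_mul]
    field_simp
  have hpairing : ∑ i, v i * w i / b i = v j / b j := by
    simp [hterm, Finset.sum_sub_distrib, ← Finset.mul_sum, hv, Pi.single_apply]
  exact ⟨w, hw, hpairing ▸ div_ne_zero hj (hb j)⟩

section LaurentMonomial

variable {ι : Type*} [Fintype ι] {b : ι → ℤ}

/-- The Laurent monomial with exponent vector `b`, as a function of its variables. It takes the junk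
value `0` where a variable with a negative exponent vanishes. -/
def laurentMonomial {M : Type*} [CommGroupWithZero M] (b : ι → ℤ) (z : ι → M) : M :=
  ∏ i, z i ^ b i

theorem laurentMonomial_ne_zero {M : Type*} [CommGroupWithZero M] {z : ι → M}
    (hz : ∀ i, z i ≠ 0) : laurentMonomial b z ≠ 0 :=
  Finset.prod_ne_zero_iff.2 fun i _ => zpow_ne_zero _ (hz i)

variable {𝕜 : Type*} [NontriviallyNormedField 𝕜] {z : ι → 𝕜}

/-- The logarithmic derivative `∑ bᵢ dzᵢ / zᵢ` of the Laurent monomial with exponent vector `b`, as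
a linear form on tangent vectors at `z`. -/
noncomputable def dlogMonomial (b : ι → ℤ) (z : ι → 𝕜) : (ι → 𝕜) →L[𝕜] 𝕜 :=
  ∑ i, ((b i : 𝕜) / z i) • proj i

theorem dlogMonomial_apply (b : ι → ℤ) (z v : ι → 𝕜) :
    dlogMonomial b z v = ∑ i, (b i : 𝕜) / z i * v i := by
  simp [dlogMonomial, sum_apply]

theorem hasFDerivAt_laurentMonomial (hz : ∀ i, z i ≠ 0) :
    HasFDerivAt (laurentMonomial b) (laurentMonomial b z • dlogMonomial b z) z := by
  classical
  have hfactor (i : ι) : HasFDerivAt (fun y : ι → 𝕜 => y i ^ b i)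
      ((b i * z i ^ (b i - 1)) • (proj i : (ι → 𝕜) →L[𝕜] 𝕜)) z :=
    (hasDerivAt_zpow (b i) (z i) (.inl (hz i))).comp_hasFDerivAt z (hasFDerivAt_apply i z)
  refine (HasFDerivAt.finsetProd fun i _ => hfactor i).congr_fderiv ?_
  rw [dlogMonomial, Finset.smul_sum]
  refine Finset.sum_congr rfl fun i hi => ?_
  rw [smul_smul, smul_smul, laurentMonomial, ← Finset.prod_erase_mul _ _ hi, zpow_sub_one₀ (hz i)]
  congr 1
  ring

theorem hasFDerivAt_dlogMonomial (hz : ∀ i, z i ≠ 0) :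
    HasFDerivAt (dlogMonomial b)
      (∑ i, (-((b i : 𝕜) / z i ^ 2) • (proj i : (ι → 𝕜) →L[𝕜] 𝕜)).smulRight
        (proj i : (ι → 𝕜) →L[𝕜] 𝕜)) z := by
  have hcoeff (i : ι) : HasFDerivAt (fun y : ι → 𝕜 => (b i : 𝕜) / y i)
      (-((b i : 𝕜) / z i ^ 2) • (proj i : (ι → 𝕜) →L[𝕜] 𝕜)) z := by
    have hinv : HasDerivAt (fun x : 𝕜 => (b i : 𝕜) / x) (-((b i : 𝕜) / z i ^ 2)) (z i) := by
      simpa only [div_eq_mul_inv, mul_neg] using (hasDerivAt_inv (hz i)).const_mul (b i : 𝕜)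
    exact hinv.comp_hasFDerivAt z (hasFDerivAt_apply i z)
  exact HasFDerivAt.fun_sum fun i _ => (hcoeff i).smul_const (proj i : (ι → 𝕜) →L[𝕜] 𝕜)

theorem fderiv_fderiv_laurentMonomial_apply (hz : ∀ i, z i ≠ 0) (v w : ι → 𝕜) :
    fderiv 𝕜 (fderiv 𝕜 (laurentMonomial b)) z v w =
      laurentMonomial b z * (dlogMonomial b z v * dlogMonomial b z w -
        ∑ i, (b i : 𝕜) / z i ^ 2 * v i * w i) := by
  have hnhds : ∀ᶠ y in 𝓝 z, ∀ i, y i ≠ 0 :=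
    eventually_all.2 fun i => (continuous_apply i).continuousAt.eventually_ne (hz i)
  have hfirst : fderiv 𝕜 (laurentMonomial b) =ᶠ[𝓝 z]
      fun y => laurentMonomial b y • dlogMonomial b y :=
    hnhds.mono fun y hy => (hasFDerivAt_laurentMonomial hy).fderiv
  rw [hfirst.fderiv_eq,
    ((hasFDerivAt_laurentMonomial hz).fun_smul (hasFDerivAt_dlogMonomial hz)).fderiv]
  simp only [add_apply, smul_apply, sum_apply, smulRight_apply, proj_apply, smul_eq_mul, neg_mul,
    Finset.sum_neg_distrib]
  ring

theorem fderiv_fderiv_laurentMonomial_apply_of_eq_div (hb : ∀ i, (b i : 𝕜) ≠ 0) {c : 𝕜}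
    (hc : c ≠ 0) (hz : ∀ i, z i = b i / c) {v : ι → 𝕜} (hv : ∑ i, v i = 0) (w : ι → 𝕜) :
    fderiv 𝕜 (fderiv 𝕜 (laurentMonomial b)) z v w =
      -(laurentMonomial b z * c ^ 2) * ∑ i, v i * w i / b i := by
  have hz0 (i : ι) : z i ≠ 0 := hz i ▸ div_ne_zero (hb i) hc
  have hdlog : dlogMonomial b z v = 0 := by
    have hcoeff (i : ι) : (b i : 𝕜) / z i = c := by rw [hz, div_div_cancel₀ (hb i)]
    simp only [dlogMonomial_apply, hcoeff, ← Finset.mul_sum, hv, mul_zero]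
  have hdiag (i : ι) : (b i : 𝕜) / z i ^ 2 * v i * w i = c ^ 2 * (v i * w i / b i) := by
    have hbi := hb i
    rw [hz]
    field_simp
  rw [fderiv_fderiv_laurentMonomial_apply hz0, hdlog]
  simp only [hdiag, ← Finset.mul_sum]
  ring

theorem statement1_general (hb : ∀ i, (b i : 𝕜) ≠ 0) (hsum : ∑ i, (b i : 𝕜) ≠ 0) {c : 𝕜}
    (hc : c ≠ 0) (hz : ∀ i, z i = b i / c) {v : ι → 𝕜} (hv : ∑ i, v i = 0) (hv0 : v ≠ 0) :
    ∃ w : ι → 𝕜, ∑ i, w i = 0 ∧ fderiv 𝕜 (fderiv 𝕜 (laurentMonomial b)) z v w ≠ 0 := by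
  obtain ⟨w, hw, hvw⟩ := exists_sum_eq_zero_and_sum_mul_div_ne_zero hb hsum hv hv0
  have hmonomial : laurentMonomial b z ≠ 0 :=
    laurentMonomial_ne_zero fun i => hz i ▸ div_ne_zero (hb i) hc
  refine ⟨w, hw, ?_⟩
  rw [fderiv_fderiv_laurentMonomial_apply_of_eq_div hb hc hz hv]
  exact mul_ne_zero (neg_ne_zero.2 (mul_ne_zero hmonomial (pow_ne_zero 2 hc))) hvw

end LaurentMonomial

theorem sum_castSucc_ne_zero {M : Type*} [AddCommMonoid M] {n : ℕ} {a : Fin (n + 1) → M}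
    (hbal : ∑ i, a i = 0) (hlast : a (Fin.last n) ≠ 0) : ∑ i : Fin n, a i.castSucc ≠ 0 := by
  intro hinit
  exact hlast (by rwa [Fin.sum_univ_castSucc, hinit, zero_add] at hbal)

/-- For a balanced nonzero `a ∈ ℤ^{d+2}` (`d ≥ 1`), the unique critical
point `z*` (with `z* i = a i / a (d+1)`) of the circuit potential
`W z = ∏ i, z i ^ a i` on the affine chart of the `d`-dimensional pair of pants is
nondegenerate: the second complex Fréchet derivative `D²W(z*)`, viewed as a bilinear
form on the direction subspace `T = {v : ∑ v i = 0}`, is nondegenerate. -/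
theorem statement1 (d : ℕ) (hd : 1 ≤ d) (a : Fin (d + 2) → ℤ)
    (hne : ∀ i, a i ≠ 0) (hbal : ∑ i, a i = 0)
    (W : (Fin (d + 1) → ℂ) → ℂ)
    (hW : W = fun z => ∏ i : Fin (d + 1), z i ^ a i.castSucc)
    (zstar : Fin (d + 1) → ℂ)
    (hzstar : ∀ i, zstar i = (a i.castSucc : ℂ) / (a (Fin.last (d + 1)) : ℂ)) :
    ∀ v : Fin (d + 1) → ℂ, ∑ i, v i = 0 → v ≠ 0 →
      ∃ w : Fin (d + 1) → ℂ, ∑ i, w i = 0 ∧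
        fderiv ℂ (fderiv ℂ W) zstar v w ≠ 0 := by
  intro v hv hv0
  subst hW
  exact statement1_general (fun i => Int.cast_ne_zero.2 (hne i.castSucc))
    (mod_cast sum_castSucc_ne_zero hbal (hne _)) (Int.cast_ne_zero.2 (hne _)) hzstar hv hv0
end

section
/- Fix positive integers a_0, a_1 and a real number C < 0, and for each m ∈ ℤ define μ̃_m : [C/a_0, −C/a_1] → ℂ by μ̃_m(t) = t·(1 + (2πm/C)·i) and μ_m = exp ∘ μ̃_m. Then for all integers j < k, the intersection of the images μ_j([C/a_0, −C/a_1]) ∩ μ_k([C/a_0, −C/a_1]) equals the set {exp(μ̃_k(Cn/(j−k))) : n ∈ ℤ, −(k−j)/a_0 ≤ n ≤ (k−j)/a_1}, and this set is finite with exactly ⌊(k−j)/a_0⌋ + ⌊(k−j)/a_1⌋ + 1 elements. -/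
open Complex

/-! On `thimble C m` the modulus at time `t` is `exp t`, so two thimble paths can only meet at a
common time `t`. There the logarithmic lifts of the paths `j` and `k` differ by `2π(j - k)t/C · i`,
which lies in `2πi ℤ` exactly when `t = Cn/(j - k)` for some integer `n`. Counting the crossings
therefore amounts to counting the integers `n` for which this time lies in the given interval. -/

/-- The logarithmic lift `μ̃_m` of a thimble path. The winding parameter `m` is allowed to be any
real number. -/
noncomputable def thimbleLift (C m t : ℝ) : ℂ :=
  (t : ℂ) * (1 + (2 * Real.pi * m / C : ℝ) * I)

/-- The thimble path `μ_m = exp ∘ μ̃_m`, a logarithmic spiral in `ℂ*` when `m ≠ 0`. -/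
noncomputable def thimble (C m t : ℝ) : ℂ :=
  Complex.exp (thimbleLift C m t)

/-- The times at which the thimble paths with winding parameters `j` and `k` meet, indexed by
the integers. -/
noncomputable def crossingTime (C j k : ℝ) (n : ℤ) : ℝ :=
  C * n / (j - k)

theorem norm_thimble (C m t : ℝ) : ‖thimble C m t‖ = Real.exp t := by
  simp [thimble, thimbleLift, Complex.norm_exp]

theorem eq_of_thimble_eq_thimble {C j k s t : ℝ} (h : thimble C j s = thimble C k t) : s = t :=
  Real.exp_injective <| by simpa only [norm_thimble] using congrArg norm h

theorem thimble_injective (C m : ℝ) : Function.Injective (thimble C m) :=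
  fun _ _ ↦ eq_of_thimble_eq_thimble

section Crossing

variable {C j k : ℝ}

theorem crossingTime_injective (hC : C ≠ 0) (hjk : j ≠ k) :
    Function.Injective (crossingTime C j k) := fun _ _ h ↦
  Int.cast_injective <| mul_left_cancel₀ hC <| (div_left_inj' (sub_ne_zero.2 hjk)).1 h

theorem thimbleLift_eq_add_int_mul_two_pi_I_iff (hC : C ≠ 0) (hjk : j ≠ k) (t : ℝ) (n : ℤ) :
    thimbleLift C j t = thimbleLift C k t + n * (2 * Real.pi * I) ↔ t = crossingTime C j k n := by
  have hsub : j - k ≠ 0 := sub_ne_zero.2 hjk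
  calc
    _ ↔ t * (2 * Real.pi * j / C) = t * (2 * Real.pi * k / C) + n * (2 * Real.pi) := by
      simp [thimbleLift, Complex.ext_iff]
    _ ↔ 2 * Real.pi / C * (t * (j - k)) = 2 * Real.pi / C * (C * n) := by
      rw [← sub_eq_zero, ← sub_eq_zero (a := 2 * Real.pi / C * _)]
      field_simp
      ring_nf
    _ ↔ t * (j - k) = C * n := mul_right_inj' (by positivity)
    _ ↔ t = crossingTime C j k n := (eq_div_iff hsub).symm

theorem thimble_eq_thimble_iff (hC : C ≠ 0) (hjk : j ≠ k) {s t : ℝ} :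
    thimble C j s = thimble C k t ↔ s = t ∧ t ∈ Set.range (crossingTime C j k) := by
  have meet_iff : thimble C j t = thimble C k t ↔ t ∈ Set.range (crossingTime C j k) := by
    simp only [thimble, Complex.exp_eq_exp_iff_exists_int,
      thimbleLift_eq_add_int_mul_two_pi_I_iff hC hjk, Set.mem_range, eq_comm]
  constructor
  · intro h
    obtain rfl := eq_of_thimble_eq_thimble h
    exact ⟨rfl, meet_iff.1 h⟩
  · rintro ⟨rfl, h⟩
    exact meet_iff.2 h

theorem image_thimble_inter_image_thimble (hC : C ≠ 0) (hjk : j ≠ k) (S T : Set ℝ) :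
    thimble C j '' S ∩ thimble C k '' T =
      (thimble C k ∘ crossingTime C j k) '' (crossingTime C j k ⁻¹' (S ∩ T)) := by
  ext w
  constructor
  · rintro ⟨⟨s, hs, rfl⟩, t, ht, hts⟩
    obtain ⟨rfl, n, rfl⟩ := (thimble_eq_thimble_iff hC hjk).1 hts.symm
    exact ⟨n, ⟨hs, ht⟩, hts⟩
  · rintro ⟨n, ⟨hS, hT⟩, rfl⟩
    exact ⟨⟨_, hS, (thimble_eq_thimble_iff hC hjk).2 ⟨rfl, n, rfl⟩⟩, _, hT, rfl⟩

theorem crossingTime_preimage_Icc (hC : C < 0) (hjk : j < k) (a₀ a₁ : ℝ) :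
    crossingTime C j k ⁻¹' Set.Icc (C / a₀) (-C / a₁) =
      (Int.cast : ℤ → ℝ) ⁻¹' Set.Icc (-(k - j) / a₀) ((k - j) / a₁) := by
  ext n
  have hscale : 0 < -C / (k - j) := div_pos (neg_pos.2 hC) (sub_pos.2 hjk)
  have hsub : k - j ≠ 0 := (sub_pos.2 hjk).ne'
  have time_eq : crossingTime C j k n = -C / (k - j) * n := by
    rw [crossingTime, ← neg_sub k j, div_neg]
    ring
  have left_eq : C / a₀ = -C / (k - j) * (-(k - j) / a₀) := by field_simp
  have right_eq : -C / a₁ = -C / (k - j) * ((k - j) / a₁) := by field_simp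
  simp only [Set.mem_preimage, Set.mem_Icc, time_eq, left_eq, right_eq,
    mul_le_mul_iff_right₀ hscale]

end Crossing

theorem ncard_intCast_preimage_Icc {R : Type*} [Ring R] [LinearOrder R] [IsOrderedRing R]
    [FloorRing R] {a b : R} (hab : a ≤ b) :
    (((Int.cast : ℤ → R) ⁻¹' Set.Icc a b).ncard : ℤ) = ⌊b⌋ + 1 - ⌈a⌉ := by
  have ceil_le : ⌈a⌉ ≤ ⌊b⌋ + 1 :=
    Int.ceil_le.2 <| hab.trans <| by exact_mod_cast (Int.lt_floor_add_one b).le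
  rw [Int.preimage_Icc, ← Finset.coe_Icc, Set.ncard_coe_finset, Int.card_Icc_of_le _ _ ceil_le]

theorem statement6_general {a₀ a₁ C j k : ℝ} (h₀ : 0 < a₀) (h₁ : 0 < a₁) (hC : C < 0)
    (hjk : j < k) :
    ((thimble C j '' Set.Icc (C / a₀) (-C / a₁)) ∩ (thimble C k '' Set.Icc (C / a₀) (-C / a₁)) =
      {w : ℂ | ∃ n : ℤ, (-(k - j) / a₀ ≤ (n : ℝ) ∧ (n : ℝ) ≤ (k - j) / a₁) ∧
        w = thimble C k (crossingTime C j k n)}) ∧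
    ((thimble C j '' Set.Icc (C / a₀) (-C / a₁)) ∩
      (thimble C k '' Set.Icc (C / a₀) (-C / a₁))).Finite ∧
    (((thimble C j '' Set.Icc (C / a₀) (-C / a₁)) ∩
      (thimble C k '' Set.Icc (C / a₀) (-C / a₁))).ncard : ℤ) =
      ⌊(k - j) / a₀⌋ + ⌊(k - j) / a₁⌋ + 1 := by
  have crossing_injective : Function.Injective (thimble C k ∘ crossingTime C j k) :=
    (thimble_injective C k).comp (crossingTime_injective hC.ne hjk.ne)
  have endpoints_le : -(k - j) / a₀ ≤ (k - j) / a₁ := by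
    have : 0 < k - j := sub_pos.2 hjk
    rw [neg_div]
    exact (neg_nonpos.2 (by positivity)).trans (by positivity)
  rw [image_thimble_inter_image_thimble hC.ne hjk.ne, Set.inter_self,
    crossingTime_preimage_Icc hC hjk]
  refine ⟨?_, ?_, ?_⟩
  · ext w
    simp only [Set.mem_image, Set.mem_preimage, Set.mem_Icc, Set.mem_ofPred_eq,
      Function.comp_apply, eq_comm]
  · rw [Int.preimage_Icc]
    exact (Set.finite_Icc _ _).image _
  · rw [Set.ncard_image_of_injective _ crossing_injective, ncard_intCast_preimage_Icc endpoints_le,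
      neg_div, Int.ceil_neg]
    ring

/-- For positive integers `a₀, a₁`, `C < 0`, logarithmic segments
`μ̃_m t = t (1 + (2πm/C) i)` on `[C/a₀, -C/a₁]` and thimble paths `μ_m = exp ∘ μ̃_m`:
for `j < k`, the intersection of the images of `μ_j` and `μ_k` equals
`{exp (μ̃_k (Cn/(j-k))) : n ∈ ℤ, -(k-j)/a₀ ≤ n ≤ (k-j)/a₁}`, and it is finite with
exactly `⌊(k-j)/a₀⌋ + ⌊(k-j)/a₁⌋ + 1` elements. -/
theorem statement6 (a₀ a₁ : ℕ) (h₀ : 0 < a₀) (h₁ : 0 < a₁) (C : ℝ) (hC : C < 0)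
    (μt : ℤ → ℝ → ℂ)
    (hμt : ∀ m t, μt m t = (t : ℂ) * (1 + (2 * Real.pi * m / C : ℝ) * I))
    (μ : ℤ → ℝ → ℂ) (hμ : ∀ m t, μ m t = Complex.exp (μt m t))
    (j k : ℤ) (hjk : j < k) :
    ((μ j '' Set.Icc (C / a₀) (-C / a₁)) ∩ (μ k '' Set.Icc (C / a₀) (-C / a₁)) =
      {w : ℂ | ∃ n : ℤ, (-((k : ℝ) - j) / a₀ ≤ (n : ℝ) ∧ (n : ℝ) ≤ ((k : ℝ) - j) / a₁) ∧
        w = Complex.exp (μt k (C * n / ((j : ℝ) - k)))}) ∧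
    ((μ j '' Set.Icc (C / a₀) (-C / a₁)) ∩ (μ k '' Set.Icc (C / a₀) (-C / a₁))).Finite ∧
    (((μ j '' Set.Icc (C / a₀) (-C / a₁)) ∩ (μ k '' Set.Icc (C / a₀) (-C / a₁))).ncard : ℤ) =
      ⌊((k : ℚ) - j) / a₀⌋ + ⌊((k : ℚ) - j) / a₁⌋ + 1 := by
  obtain rfl : μt = fun m : ℤ ↦ thimbleLift C m := funext₂ hμt
  obtain rfl : μ = fun m : ℤ ↦ thimble C m := funext₂ hμ
  simp only [← Rat.floor_cast (α := ℝ), Rat.cast_div, Rat.cast_sub, Rat.cast_intCast,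
    Rat.cast_natCast]
  exact statement6_general (Nat.cast_pos.2 h₀) (Nat.cast_pos.2 h₁) hC (Int.cast_lt.2 hjk)
end

section
/- For every d ≥ 1, the maps g([U_0:U_1:U_2], [V_0:⋯:V_d]) = [−V_0·U_0 : −V_0·U_1 : U_2·V_1 : ⋯ : U_2·V_d] and h([Z_0:⋯:Z_{d+1}]) = ([Z_0 : Z_1 : −Z_0−Z_1], [Z_0+Z_1 : Z_2 : ⋯ : Z_{d+1}]) are well defined (independent of the choices of representatives) and are mutually inverse bijections between the product P_1 × P_{d−1} and the subset {[Z_0:⋯:Z_{d+1}] ∈ P_d : Z_0 + Z_1 ≠ 0}. -/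
open Projectivization

/-!
A point of `P_d` with `Z₀ + Z₁ ≠ 0` is cut along that sum: `(Z₀, Z₁)` is closed up by the
coordinate `-Z₀ - Z₁`, and in the remaining vector `Z₀` and `Z₁` are merged into `Z₀ + Z₁`.
Gluing rescales the two vectors so that the added coordinate and the merged one cancel.
On homogeneous coordinates the two compositions only multiply by scalars: cutting a glued pair
`(U, V)` returns `(-V₀ U, U₂ V)`, and gluing the two pieces of `Z` returns `-(Z₀ + Z₁) Z`. These
scalars are nonzero on the pairs of pants, so the induced maps on projective points are inverse
to each other.
-/

open scoped LinearAlgebra.Projectivization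

theorem forall_fin_add_two {d : ℕ} {P : Fin (d + 2) → Prop} :
    (∀ i, P i) ↔ P 0 ∧ P 1 ∧ ∀ i : Fin d, P i.succ.succ := by
  rw [Fin.forall_fin_succ, Fin.forall_fin_succ, Fin.succ_zero_eq_one]

theorem sum_fin_add_two {M : Type*} [AddCommMonoid M] {d : ℕ} (Z : Fin (d + 2) → M) :
    ∑ i, Z i = Z 0 + Z 1 + ∑ i : Fin d, Z i.succ.succ := by
  rw [Fin.sum_univ_succ, Fin.sum_univ_succ, Fin.succ_zero_eq_one]
  exact (add_assoc _ _ _).symm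

/-- The vectors of homogeneous coordinates of points of a pair of pants: all entries are nonzero
and they sum to zero. -/
def IsPantsVector {M ι : Type*} [AddCommMonoid M] [Fintype ι] (v : ι → M) : Prop :=
  (∀ i, v i ≠ 0) ∧ ∑ i, v i = 0

theorem IsPantsVector.ne_zero {M ι : Type*} [AddCommMonoid M] [Fintype ι] [Nonempty ι] {v : ι → M}
    (hv : IsPantsVector v) : v ≠ 0 :=
  fun h => hv.1 (Classical.arbitrary ι) (congrFun h _)

theorem isPantsVector_smul_iff {R ι : Type*} [Semiring R] [NoZeroDivisors R] [Fintype ι] {c : R}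
    (hc : c ≠ 0) {v : ι → R} : IsPantsVector (c • v) ↔ IsPantsVector v := by
  simp [IsPantsVector, ← Finset.mul_sum, hc]

section Vectors

variable {R : Type*} [CommRing R] {d : ℕ}

/-- The map `g` on homogeneous coordinates. -/
def glueVec (U : Fin 3 → R) (V : Fin (d + 1) → R) : Fin (d + 2) → R :=
  Fin.cons (-(V 0) * U 0) (Fin.cons (-(V 0) * U 1) fun i : Fin d => U 2 * V i.succ)

/-- The first component of the map `h` on homogeneous coordinates: the first two coordinates,
closed up by a third one that makes the sum vanish. -/
def closeUpVec (Z : Fin (d + 2) → R) : Fin 3 → R :=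
  ![Z 0, Z 1, -(Z 0) - Z 1]

/-- The second component of the map `h` on homogeneous coordinates: the first two coordinates are
merged into their sum. -/
def mergeVec (Z : Fin (d + 2) → R) : Fin (d + 1) → R :=
  Fin.cons (Z 0 + Z 1) fun i : Fin d => Z i.succ.succ

@[simp]
theorem glueVec_zero (U : Fin 3 → R) (V : Fin (d + 1) → R) : glueVec U V 0 = -(V 0) * U 0 := rfl

@[simp]
theorem glueVec_one (U : Fin 3 → R) (V : Fin (d + 1) → R) : glueVec U V 1 = -(V 0) * U 1 := rfl

@[simp]
theorem glueVec_succ_succ (U : Fin 3 → R) (V : Fin (d + 1) → R) (i : Fin d) :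
    glueVec U V i.succ.succ = U 2 * V i.succ := rfl

@[simp]
theorem mergeVec_zero (Z : Fin (d + 2) → R) : mergeVec Z 0 = Z 0 + Z 1 := rfl

@[simp]
theorem mergeVec_succ (Z : Fin (d + 2) → R) (i : Fin d) : mergeVec Z i.succ = Z i.succ.succ := rfl

theorem glueVec_smul_smul (a b : R) (U : Fin 3 → R) (V : Fin (d + 1) → R) :
    glueVec (a • U) (b • V) = (a * b) • glueVec U V := by
  refine funext (forall_fin_add_two.2 ⟨?_, ?_, fun i => ?_⟩) <;>
    simp only [glueVec_zero, glueVec_one, glueVec_succ_succ, Pi.smul_apply, smul_eq_mul] <;> ring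

theorem closeUpVec_smul (a : R) (Z : Fin (d + 2) → R) :
    closeUpVec (a • Z) = a • closeUpVec Z := by
  simp [closeUpVec, mul_sub]

theorem mergeVec_smul (a : R) (Z : Fin (d + 2) → R) : mergeVec (a • Z) = a • mergeVec Z :=
  funext (Fin.forall_fin_succ.2 ⟨by simp [mul_add], fun i => by simp⟩)

theorem glueVec_zero_add_glueVec_one {U : Fin 3 → R} (hU : ∑ i, U i = 0) (V : Fin (d + 1) → R) :
    glueVec U V 0 + glueVec U V 1 = U 2 * V 0 := by
  rw [Fin.sum_univ_three] at hU
  rw [glueVec_zero, glueVec_one]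
  linear_combination -V 0 * hU

theorem closeUpVec_glueVec {U : Fin 3 → R} (hU : ∑ i, U i = 0) (V : Fin (d + 1) → R) :
    closeUpVec (glueVec U V) = -V 0 • U := by
  have third : -glueVec U V 0 - glueVec U V 1 = -V 0 * U 2 := by
    linear_combination -glueVec_zero_add_glueVec_one hU V
  ext i
  fin_cases i
  exacts [rfl, rfl, third]

theorem mergeVec_glueVec {U : Fin 3 → R} (hU : ∑ i, U i = 0) (V : Fin (d + 1) → R) :
    mergeVec (glueVec U V) = U 2 • V :=
  funext (Fin.forall_fin_succ.2 ⟨glueVec_zero_add_glueVec_one hU V, fun _ => rfl⟩)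

theorem glueVec_closeUpVec_mergeVec (Z : Fin (d + 2) → R) :
    glueVec (closeUpVec Z) (mergeVec Z) = -(Z 0 + Z 1) • Z := by
  have third : closeUpVec Z 2 = -(Z 0 + Z 1) := (neg_add' _ _).symm
  refine funext (forall_fin_add_two.2 ⟨rfl, rfl, fun i => ?_⟩)
  rw [glueVec_succ_succ, third, mergeVec_succ, Pi.smul_apply, smul_eq_mul]

theorem sum_glueVec {U : Fin 3 → R} (hU : ∑ i, U i = 0) (V : Fin (d + 1) → R) :
    ∑ i, glueVec U V i = U 2 * ∑ i, V i := by
  rw [sum_fin_add_two, glueVec_zero_add_glueVec_one hU, Fin.sum_univ_succ V, mul_add,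
    Finset.mul_sum]
  rfl

theorem sum_closeUpVec (Z : Fin (d + 2) → R) : ∑ i, closeUpVec Z i = 0 := by
  simp [closeUpVec, Fin.sum_univ_three]

theorem sum_mergeVec (Z : Fin (d + 2) → R) : ∑ i, mergeVec Z i = ∑ i, Z i := by
  rw [sum_fin_add_two, Fin.sum_univ_succ]
  rfl

theorem IsPantsVector.glueVec [NoZeroDivisors R] {U : Fin 3 → R} {V : Fin (d + 1) → R}
    (hU : IsPantsVector U) (hV : IsPantsVector V) : IsPantsVector (glueVec U V) := by
  refine ⟨forall_fin_add_two.2 ⟨?_, ?_, fun i => ?_⟩, by rw [sum_glueVec hU.2, hV.2, mul_zero]⟩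
  · exact mul_ne_zero (neg_ne_zero.2 (hV.1 0)) (hU.1 0)
  · exact mul_ne_zero (neg_ne_zero.2 (hV.1 0)) (hU.1 1)
  · exact mul_ne_zero (hU.1 2) (hV.1 i.succ)

theorem IsPantsVector.closeUpVec {Z : Fin (d + 2) → R} (hZ : IsPantsVector Z)
    (hZ01 : Z 0 + Z 1 ≠ 0) : IsPantsVector (closeUpVec Z) := by
  have third : -Z 0 - Z 1 ≠ 0 := by rwa [← neg_add', neg_ne_zero]
  refine ⟨fun i => ?_, sum_closeUpVec Z⟩
  fin_cases i
  exacts [hZ.1 0, hZ.1 1, third]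

theorem IsPantsVector.mergeVec {Z : Fin (d + 2) → R} (hZ : IsPantsVector Z)
    (hZ01 : Z 0 + Z 1 ≠ 0) : IsPantsVector (mergeVec Z) :=
  ⟨Fin.forall_fin_succ.2 ⟨hZ01, fun i => hZ.1 i.succ.succ⟩, (sum_mergeVec Z).trans hZ.2⟩

end Vectors

section MkOrArbitrary

variable {K V : Type*} [DivisionRing K] [AddCommGroup V] [Module K V] [Nontrivial V]

variable (K) in
open Classical in
/-- The projective point spanned by `v`, with an arbitrary value at `v = 0`. It makes total the
maps that formulas in homogeneous coordinates define only where the resulting vector is nonzero. -/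
noncomputable def mkOrArbitrary (v : V) : ℙ K V :=
  if hv : v ≠ 0 then .mk K v hv else Classical.arbitrary _

theorem mkOrArbitrary_of_ne_zero {v : V} (hv : v ≠ 0) : mkOrArbitrary K v = .mk K v hv :=
  dif_pos hv

theorem mkOrArbitrary_rep (p : ℙ K V) : mkOrArbitrary K p.rep = p := by
  rw [mkOrArbitrary_of_ne_zero p.rep_nonzero, mk_rep]

theorem mkOrArbitrary_smul {c : K} (hc : c ≠ 0) (v : V) :
    mkOrArbitrary K (c • v) = mkOrArbitrary K v := by
  obtain rfl | hv := eq_or_ne v 0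
  · rw [smul_zero]
  · rw [mkOrArbitrary_of_ne_zero hv, mkOrArbitrary_of_ne_zero (smul_ne_zero hc hv), mk_eq_mk_iff']
    exact ⟨c, rfl⟩

end MkOrArbitrary

theorem exists_ne_zero_rep_mk_eq_smul {K V : Type*} [DivisionRing K] [AddCommGroup V] [Module K V]
    {v : V} (hv : v ≠ 0) : ∃ a : K, a ≠ 0 ∧ (Projectivization.mk K v hv).rep = a • v := by
  obtain ⟨a, ha⟩ := exists_smul_eq_mk_rep K v hv
  exact ⟨a, a.ne_zero, ha.symm⟩

section PairOfPants

variable {K : Type*} [Field K] {ι : Type*} [Fintype ι] {d : ℕ}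

variable (K ι) in
/-- The pair of pants over a field `K` with homogeneous coordinates indexed by `ι`; the
`m`-dimensional one `P_m` is the case `ι = Fin (m + 2)`. -/
def pairOfPants : Set (ℙ K (ι → K)) :=
  {p | IsPantsVector p.rep}

variable (K d) in
/-- The part of the `d`-dimensional pair of pants off the hyperplane `Z₀ + Z₁ = 0`, which is the
image of the gluing map. -/
def pantsOffHyperplane : Set (ℙ K (Fin (d + 2) → K)) :=
  {z ∈ pairOfPants K (Fin (d + 2)) | z.rep 0 + z.rep 1 ≠ 0}

/-- The map `g` on projective points, extended arbitrarily to the pairs for which the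
formula gives the zero vector. -/
noncomputable def glue (p : ℙ K (Fin 3 → K) × ℙ K (Fin (d + 1) → K)) : ℙ K (Fin (d + 2) → K) :=
  mkOrArbitrary K (glueVec p.1.rep p.2.rep)

/-- The map `h` on projective points, with each component extended arbitrarily to the
points for which its formula gives the zero vector. -/
noncomputable def cut (z : ℙ K (Fin (d + 2) → K)) : ℙ K (Fin 3 → K) × ℙ K (Fin (d + 1) → K) :=
  (mkOrArbitrary K (closeUpVec z.rep), mkOrArbitrary K (mergeVec z.rep))

theorem mk_mem_pairOfPants_iff {v : ι → K} (hv : v ≠ 0) :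
    .mk K v hv ∈ pairOfPants K ι ↔ IsPantsVector v := by
  obtain ⟨a, ha, hrep⟩ := exists_ne_zero_rep_mk_eq_smul (K := K) hv
  change IsPantsVector (Projectivization.mk K v hv).rep ↔ _
  rw [hrep, isPantsVector_smul_iff ha]

theorem mk_mem_pantsOffHyperplane_iff {Z : Fin (d + 2) → K} (hZ : Z ≠ 0) :
    .mk K Z hZ ∈ pantsOffHyperplane K d ↔ IsPantsVector Z ∧ Z 0 + Z 1 ≠ 0 := by
  obtain ⟨a, ha, hrep⟩ := exists_ne_zero_rep_mk_eq_smul (K := K) hZ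
  refine and_congr (mk_mem_pairOfPants_iff hZ) ?_
  rw [hrep, Pi.smul_apply, Pi.smul_apply, ← smul_add, smul_ne_zero_iff_right ha]

theorem IsPantsVector.mkOrArbitrary_mem_pairOfPants [Nonempty ι] {v : ι → K}
    (hv : IsPantsVector v) : mkOrArbitrary K v ∈ pairOfPants K ι := by
  rwa [mkOrArbitrary_of_ne_zero hv.ne_zero, mk_mem_pairOfPants_iff]

theorem glue_mk_mk {U : Fin 3 → K} {V : Fin (d + 1) → K} (hU : U ≠ 0) (hV : V ≠ 0) :
    glue (.mk K U hU, .mk K V hV) = mkOrArbitrary K (glueVec U V) := by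
  obtain ⟨a, ha, hUrep⟩ := exists_ne_zero_rep_mk_eq_smul (K := K) hU
  obtain ⟨b, hb, hVrep⟩ := exists_ne_zero_rep_mk_eq_smul (K := K) hV
  rw [glue, hUrep, hVrep, glueVec_smul_smul, mkOrArbitrary_smul (mul_ne_zero ha hb)]

theorem cut_mk {Z : Fin (d + 2) → K} (hZ : Z ≠ 0) :
    cut (.mk K Z hZ) = (mkOrArbitrary K (closeUpVec Z), mkOrArbitrary K (mergeVec Z)) := by
  obtain ⟨a, ha, hrep⟩ := exists_ne_zero_rep_mk_eq_smul (K := K) hZ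
  rw [cut, hrep, closeUpVec_smul, mergeVec_smul, mkOrArbitrary_smul ha, mkOrArbitrary_smul ha]

theorem mapsTo_glue :
    Set.MapsTo glue (pairOfPants K (Fin 3) ×ˢ pairOfPants K (Fin (d + 1)))
      (pantsOffHyperplane K d) := by
  rintro p ⟨hU, hV⟩
  have hZ := hU.glueVec hV
  rw [glue, mkOrArbitrary_of_ne_zero hZ.ne_zero, mk_mem_pantsOffHyperplane_iff,
    glueVec_zero_add_glueVec_one hU.2]
  exact ⟨hZ, mul_ne_zero (hU.1 2) (hV.1 0)⟩

theorem mapsTo_cut :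
    Set.MapsTo cut (pantsOffHyperplane K d)
      (pairOfPants K (Fin 3) ×ˢ pairOfPants K (Fin (d + 1))) :=
  fun _ ⟨hZ, hZ01⟩ => ⟨(hZ.closeUpVec hZ01).mkOrArbitrary_mem_pairOfPants,
    (hZ.mergeVec hZ01).mkOrArbitrary_mem_pairOfPants⟩

theorem leftInvOn_cut_glue :
    Set.LeftInvOn cut glue (pairOfPants K (Fin 3) ×ˢ pairOfPants K (Fin (d + 1))) := by
  rintro p ⟨hU, hV⟩
  rw [glue, mkOrArbitrary_of_ne_zero (hU.glueVec hV).ne_zero, cut_mk, closeUpVec_glueVec hU.2,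
    mergeVec_glueVec hU.2, mkOrArbitrary_smul (neg_ne_zero.2 (hV.1 0)),
    mkOrArbitrary_smul (hU.1 2), mkOrArbitrary_rep, mkOrArbitrary_rep]

theorem rightInvOn_cut_glue :
    Set.RightInvOn (cut (K := K)) glue (pantsOffHyperplane K d) := by
  rintro z ⟨hZ, hZ01⟩
  rw [cut, mkOrArbitrary_of_ne_zero (hZ.closeUpVec hZ01).ne_zero,
    mkOrArbitrary_of_ne_zero (hZ.mergeVec hZ01).ne_zero, glue_mk_mk, glueVec_closeUpVec_mergeVec,
    mkOrArbitrary_smul (neg_ne_zero.2 hZ01), mkOrArbitrary_rep]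

end PairOfPants

theorem statement9_general (K : Type*) [Field K] (d : ℕ) :
    ∃ (g : ℙ K (Fin 3 → K) × ℙ K (Fin (d + 1) → K) → ℙ K (Fin (d + 2) → K))
      (h : ℙ K (Fin (d + 2) → K) → ℙ K (Fin 3 → K) × ℙ K (Fin (d + 1) → K)),
      (∀ U V (hU : U ≠ 0) (hV : V ≠ 0) (hZ : glueVec U V ≠ 0),
        g (.mk K U hU, .mk K V hV) = .mk K (glueVec U V) hZ) ∧
      (∀ Z (hZ : Z ≠ 0) (hu : closeUpVec Z ≠ 0) (hv : mergeVec Z ≠ 0),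
        h (.mk K Z hZ) = (.mk K (closeUpVec Z) hu, .mk K (mergeVec Z) hv)) ∧
      Set.MapsTo g (pairOfPants K (Fin 3) ×ˢ pairOfPants K (Fin (d + 1)))
        (pantsOffHyperplane K d) ∧
      Set.MapsTo h (pantsOffHyperplane K d)
        (pairOfPants K (Fin 3) ×ˢ pairOfPants K (Fin (d + 1))) ∧
      Set.InvOn h g (pairOfPants K (Fin 3) ×ˢ pairOfPants K (Fin (d + 1)))
        (pantsOffHyperplane K d) := by
  refine ⟨glue, cut, fun U V hU hV hZ => ?_, fun Z hZ hu hv => ?_, mapsTo_glue, mapsTo_cut,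
    leftInvOn_cut_glue, rightInvOn_cut_glue⟩
  · rw [glue_mk_mk, mkOrArbitrary_of_ne_zero hZ]
  · rw [cut_mk, mkOrArbitrary_of_ne_zero hu, mkOrArbitrary_of_ne_zero hv]

/-- For `d ≥ 1`, the maps
`g([U₀:U₁:U₂], [V₀:⋯:V_d]) = [-V₀U₀ : -V₀U₁ : U₂V₁ : ⋯ : U₂V_d]` and
`h([Z₀:⋯:Z_{d+1}]) = ([Z₀:Z₁:-Z₀-Z₁], [Z₀+Z₁:Z₂:⋯:Z_{d+1}])` are well defined
(independent of representatives) and mutually inverse bijections between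
`P₁ × P_{d-1}` and `{[Z] ∈ P_d : Z₀ + Z₁ ≠ 0}`, where `P_m` is the `m`-dimensional
pair of pants (points of `ℙ^{m+1}` with coordinates nonzero and summing to zero). -/
theorem statement9 (d : ℕ) (hd : 1 ≤ d)
    (A : Set (Projectivization ℂ (Fin 3 → ℂ) × Projectivization ℂ (Fin (d + 1) → ℂ)))
    (hA : A = {p | ((∀ i, p.1.rep i ≠ 0) ∧ ∑ i, p.1.rep i = 0) ∧
      ((∀ i, p.2.rep i ≠ 0) ∧ ∑ i, p.2.rep i = 0)})
    (B : Set (Projectivization ℂ (Fin (d + 2) → ℂ)))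
    (hB : B = {z | ((∀ i, z.rep i ≠ 0) ∧ ∑ i, z.rep i = 0) ∧ z.rep 0 + z.rep 1 ≠ 0}) :
    ∃ (g : Projectivization ℂ (Fin 3 → ℂ) × Projectivization ℂ (Fin (d + 1) → ℂ) →
        Projectivization ℂ (Fin (d + 2) → ℂ))
      (h : Projectivization ℂ (Fin (d + 2) → ℂ) →
        Projectivization ℂ (Fin 3 → ℂ) × Projectivization ℂ (Fin (d + 1) → ℂ)),
      (∀ (U : Fin 3 → ℂ) (_ : ∀ i, U i ≠ 0) (_ : ∑ i, U i = 0)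
          (V : Fin (d + 1) → ℂ) (_ : ∀ i, V i ≠ 0) (_ : ∑ i, V i = 0)
          (hU : U ≠ 0) (hV : V ≠ 0)
          (hZ : (Fin.cons (-(V 0) * U 0) (Fin.cons (-(V 0) * U 1)
            (fun i : Fin d => U 2 * V i.succ)) : Fin (d + 2) → ℂ) ≠ 0),
        g (Projectivization.mk ℂ U hU, Projectivization.mk ℂ V hV) =
          Projectivization.mk ℂ _ hZ) ∧
      (∀ (Z : Fin (d + 2) → ℂ) (_ : ∀ i, Z i ≠ 0) (_ : ∑ i, Z i = 0)
          (_ : Z 0 + Z 1 ≠ 0) (hZ : Z ≠ 0)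
          (hu : (![Z 0, Z 1, -(Z 0) - Z 1] : Fin 3 → ℂ) ≠ 0)
          (hv : (Fin.cons (Z 0 + Z 1) (fun i : Fin d => Z i.succ.succ) :
            Fin (d + 1) → ℂ) ≠ 0),
        h (Projectivization.mk ℂ Z hZ) =
          (Projectivization.mk ℂ _ hu, Projectivization.mk ℂ _ hv)) ∧
      Set.MapsTo g A B ∧ Set.MapsTo h B A ∧ Set.InvOn h g A B := by
  subst hA hB
  obtain ⟨g, h, hg, hh, hinv⟩ := statement9_general ℂ d
  exact ⟨g, h, fun U _ _ V _ _ => hg U V, fun Z _ _ _ => hh Z, hinv⟩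
end

section
/- Let d ≥ 1 and let a = (a_0, …, a_{d+1}) ∈ ℤ^{d+2} be balanced nonzero with a_0 > 0 and a_1 > 0, and set b = (a_0 + a_1, a_2, …, a_{d+1}) ∈ ℤ^{d+1}. For s ∈ ℕ let M^a_s be the set of exponent vectors r : {0, …, d+1} → ℕ with ∑_i r_i·|a_i| = s and r_i ≤ 1 whenever a_i < 0, and define M^b_{s'} analogously for b on index set {0, …, d}. For m ∈ ℤ set σ_w(m) = a_0·max(0, −m) + a_1·max(0, m). Then the map sending r ∈ M^a_s to the pair (m, r′), where m = r_1 − r_0 and r′ = (min(r_0, r_1), r_2, r_3, …, r_{d+1}), is a bijection from M^a_s onto the set of pairs (m, r′) with m ∈ ℤ satisfying −s/a_0 ≤ m ≤ s/a_1 and r′ ∈ M^b_{s − σ_w(m)}. -/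
/-!
A pair `(x, y)` of natural numbers is determined by its difference `m = y - x` and its minimum `k`:
`x = k + max 0 (-m)` and `y = k + max 0 m`. If the two entries carry weights `p` and `q`, the
common part `k` contributes `k • (p + q)`, which is why the two weights are merged into their sum,
and the excess contributes the shift `σ_w m`. As all weights are nonnegative, `σ_w m` is at most the
total weight, and this forces the bounds on `m`.
-/

section WeightShift

variable {G : Type*}

/-- The weight shift `σ_w m = p * max 0 (-m) + q * max 0 m`. Since `n.toNat` is `max 0 n`, it makes
sense for weights `p`, `q` in any additive commutative monoid. -/
def weightShift [AddCommMonoid G] (p q : G) (m : ℤ) : G :=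
  (-m).toNat • p + m.toNat • q

theorem nsmul_add_nsmul_eq_weightShift_add [AddCommMonoid G] (p q : G) (x y : ℕ) :
    x • p + y • q = weightShift p q (y - x) + min x y • (p + q) := by
  have hx : x = (-((y : ℤ) - x)).toNat + min x y := by omega
  have hy : y = ((y : ℤ) - x).toNat + min x y := by omega
  calc
    x • p + y • q
        = ((-((y : ℤ) - x)).toNat + min x y) • p + (((y : ℤ) - x).toNat + min x y) • q := by
      rw [← hx, ← hy]
    _ = weightShift p q (y - x) + min x y • (p + q) := by
      rw [add_nsmul, add_nsmul, nsmul_add, weightShift, add_add_add_comm]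

theorem weightShift_int (p q m : ℤ) : weightShift p q m = p * max 0 (-m) + q * max 0 m := by
  simp only [weightShift, nsmul_eq_mul, Int.ofNat_toNat, mul_comm, max_comm]

variable [AddCommGroup G] [LinearOrder G] [IsOrderedAddMonoid G] {p q : G}

theorem neg_weightShift_le_zsmul (hp : 0 ≤ p) (hq : 0 ≤ q) (m : ℤ) :
    -weightShift p q m ≤ m • p := by
  calc
    -weightShift p q m ≤ -((-m).toNat • p) :=
      neg_le_neg (le_add_of_nonneg_right (nsmul_nonneg hq _))
    _ = (-((-m).toNat : ℤ)) • p := by rw [neg_zsmul, natCast_zsmul]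
    _ ≤ m • p := zsmul_le_zsmul_left hp (neg_le.1 (Int.self_le_toNat (-m)))

theorem zsmul_le_weightShift (hp : 0 ≤ p) (hq : 0 ≤ q) (m : ℤ) :
    m • q ≤ weightShift p q m := by
  calc
    m • q ≤ (m.toNat : ℤ) • q := zsmul_le_zsmul_left hq (Int.self_le_toNat m)
    _ = m.toNat • q := natCast_zsmul q _
    _ ≤ weightShift p q m := le_add_of_nonneg_left (nsmul_nonneg hp _)

end WeightShift

section Monomials

/-- The set `M^a_s` of exponent vectors of the monomials of weight `s` in the graded-symmetric
algebra on variables of weights `|a i|`, where the variables with `a i < 0` are odd. The weight `s`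
lives in the same group as the `a i`, so `s` may be negative, and then `M^a_s` is empty. -/
def monomialsOfWeight {ι G : Type*} [Fintype ι] [AddCommGroup G] [LinearOrder G]
    (a : ι → G) (s : G) : Set (ι → ℕ) :=
  {r | ∑ i, r i • |a i| = s ∧ ∀ i, a i < 0 → r i ≤ 1}

theorem mem_monomialsOfWeight_int {ι : Type*} [Fintype ι] {a : ι → ℤ} {s : ℤ} {r : ι → ℕ} :
    r ∈ monomialsOfWeight a s ↔
      ∑ i, (r i : ℤ) * (a i).natAbs = s ∧ ∀ i, a i < 0 → r i ≤ 1 := by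
  simp only [monomialsOfWeight, Set.mem_ofPred_eq, nsmul_eq_mul, Int.natCast_natAbs]

theorem monomialsOfWeight_natCast {ι : Type*} [Fintype ι] (a : ι → ℤ) (s : ℕ) :
    monomialsOfWeight a (s : ℤ) =
      {r | ∑ i, r i * (a i).natAbs = s ∧ ∀ i, a i < 0 → r i ≤ 1} := by
  ext r
  rw [mem_monomialsOfWeight_int, Set.mem_ofPred_eq]
  norm_cast

/-- The lower-rank vector `b = (a₀ + a₁, a₂, …, a_{d+1})` associated with `a`. -/
def mergeWeights {d : ℕ} {G : Type*} [Add G] (a : Fin (d + 2) → G) : Fin (d + 1) → G :=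
  Fin.cons (a 0 + a 1) fun i ↦ a i.succ.succ

/-- The correspondence `r ↦ (r₁ - r₀, (min r₀ r₁, r₂, …, r_{d+1}))` on all exponent vectors, before
any restriction on the weight. -/
def mergeExponentsEquiv (d : ℕ) : (Fin (d + 2) → ℕ) ≃ ℤ × (Fin (d + 1) → ℕ) where
  toFun r := ((r 1 : ℤ) - r 0, Fin.cons (min (r 0) (r 1)) fun i ↦ r i.succ.succ)
  invFun z := Fin.cons (z.2 0 + (-z.1).toNat) (Fin.cons (z.2 0 + z.1.toNat) (Fin.tail z.2))
  left_inv r := by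
    ext i
    cases i using Fin.cases with
    | zero => simp only [Fin.cons_zero]; omega
    | succ i =>
      cases i using Fin.cases with
      | zero => simp only [Fin.succ_zero_eq_one, Fin.cons_one, Fin.cons_zero]; omega
      | succ i => rfl
  right_inv z := by
    ext i
    · simp only [Fin.cons_zero, Fin.cons_one]; omega
    · cases i using Fin.cases with
      | zero => simp only [Fin.cons_zero, Fin.cons_one]; omega
      | succ i => rfl

variable {d : ℕ} {G : Type*} [AddCommGroup G] [LinearOrder G] [IsOrderedAddMonoid G]
  {a : Fin (d + 2) → G}

theorem sum_nsmul_abs_eq_weightShift_add (h0 : 0 ≤ a 0) (h1 : 0 ≤ a 1) (r : Fin (d + 2) → ℕ) :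
    ∑ i, r i • |a i| = weightShift (a 0) (a 1) (mergeExponentsEquiv d r).1 +
      ∑ i, (mergeExponentsEquiv d r).2 i • |mergeWeights a i| := by
  simp only [mergeExponentsEquiv, mergeWeights, Equiv.coe_fn_mk, Fin.sum_univ_succ, Fin.cons_zero,
    Fin.cons_succ, Fin.succ_zero_eq_one, abs_of_nonneg h0, abs_of_nonneg h1,
    abs_of_nonneg (add_nonneg h0 h1)]
  rw [← add_assoc, ← add_assoc, nsmul_add_nsmul_eq_weightShift_add]

theorem forall_mergeExponents_le_one_iff (h0 : 0 ≤ a 0) (h1 : 0 ≤ a 1) (r : Fin (d + 2) → ℕ) :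
    (∀ i, mergeWeights a i < 0 → (mergeExponentsEquiv d r).2 i ≤ 1) ↔ ∀ i, a i < 0 → r i ≤ 1 := by
  simp only [mergeExponentsEquiv, mergeWeights, Equiv.coe_fn_mk, Fin.forall_fin_succ (n := d),
    Fin.forall_fin_succ (n := d + 1), Fin.cons_zero, Fin.cons_succ, Fin.succ_zero_eq_one,
    h0.not_gt, h1.not_gt, (add_nonneg h0 h1).not_gt, false_imp_iff, true_and]

theorem mergeExponents_mem_monomialsOfWeight_iff (h0 : 0 ≤ a 0) (h1 : 0 ≤ a 1)
    (r : Fin (d + 2) → ℕ) (s : G) :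
    (mergeExponentsEquiv d r).2 ∈ monomialsOfWeight (mergeWeights a)
        (s - weightShift (a 0) (a 1) (mergeExponentsEquiv d r).1) ↔
      r ∈ monomialsOfWeight a s := by
  simp only [monomialsOfWeight, Set.mem_ofPred_eq, forall_mergeExponents_le_one_iff h0 h1,
    sum_nsmul_abs_eq_weightShift_add h0 h1, eq_sub_iff_add_eq']

theorem le_of_mem_monomialsOfWeight_sub {ι : Type*} [Fintype ι] {b : ι → G} {s t : G}
    {r : ι → ℕ} (hr : r ∈ monomialsOfWeight b (s - t)) : t ≤ s :=
  sub_nonneg.1 <| hr.1 ▸ Finset.sum_nonneg fun i _ ↦ nsmul_nonneg (abs_nonneg (b i)) (r i)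

theorem statement12_general (h0 : 0 ≤ a 0) (h1 : 0 ≤ a 1) (s : G) :
    Set.BijOn (mergeExponentsEquiv d) (monomialsOfWeight a s)
      {z | (-s ≤ z.1 • a 0 ∧ z.1 • a 1 ≤ s) ∧
        z.2 ∈ monomialsOfWeight (mergeWeights a) (s - weightShift (a 0) (a 1) z.1)} := by
  refine (mergeExponentsEquiv d).bijOn fun r ↦ ?_
  rw [Set.mem_ofPred_eq, mergeExponents_mem_monomialsOfWeight_iff h0 h1]
  refine and_iff_right_of_imp fun hr ↦ ?_
  have hshift : weightShift (a 0) (a 1) (mergeExponentsEquiv d r).1 ≤ s :=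
    le_of_mem_monomialsOfWeight_sub ((mergeExponents_mem_monomialsOfWeight_iff h0 h1 r s).2 hr)
  exact ⟨(neg_le_neg hshift).trans (neg_weightShift_le_zsmul h0 h1 _),
    (zsmul_le_weightShift h0 h1 _).trans hshift⟩

end Monomials

theorem neg_div_le_and_le_div_iff_zsmul {K : Type*} [Field K] [LinearOrder K]
    [IsStrictOrderedRing K] {p q : ℤ} (hp : 0 < p) (hq : 0 < q) (s m : ℤ) :
    (-(s : K) / p ≤ m ∧ (m : K) ≤ s / q) ↔ -s ≤ m • p ∧ m • q ≤ s := by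
  rw [div_le_iff₀ (Int.cast_pos.2 hp), le_div_iff₀ (Int.cast_pos.2 hq), smul_eq_mul, smul_eq_mul]
  norm_cast

/-- For balanced nonzero `a ∈ ℤ^{d+2}` (`d ≥ 1`) with `a₀, a₁ > 0` and
`b = (a₀+a₁, a₂, …, a_{d+1})`, the map `r ↦ (m, r')` with `m = r₁ - r₀` and
`r' = (min(r₀,r₁), r₂, …, r_{d+1})` is a bijection from the set `M^a_s` of exponent
vectors of weight `s` (with `rᵢ ≤ 1` whenever `aᵢ < 0`) onto the set of pairs `(m, r')`
with `-s/a₀ ≤ m ≤ s/a₁` and `r' ∈ M^b_{s - σ_w(m)}`, where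
`σ_w(m) = a₀·max(0,-m) + a₁·max(0,m)`. -/
theorem statement12 (d : ℕ) (hd : 1 ≤ d) (a : Fin (d + 2) → ℤ)
    (hne : ∀ i, a i ≠ 0) (hbal : ∑ i, a i = 0) (h0 : 0 < a 0) (h1 : 0 < a 1)
    (b : Fin (d + 1) → ℤ) (hb : b = Fin.cons (a 0 + a 1) (fun i : Fin d => a i.succ.succ))
    (σw : ℤ → ℤ) (hσw : ∀ m, σw m = a 0 * max 0 (-m) + a 1 * max 0 m)
    (s : ℕ) :
    Set.BijOn
      (fun r : Fin (d + 2) → ℕ =>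
        ((r 1 : ℤ) - (r 0 : ℤ),
          (Fin.cons (min (r 0) (r 1)) (fun i : Fin d => r i.succ.succ) : Fin (d + 1) → ℕ)))
      {r : Fin (d + 2) → ℕ | ∑ i, r i * (a i).natAbs = s ∧ ∀ i, a i < 0 → r i ≤ 1}
      {p : ℤ × (Fin (d + 1) → ℕ) |
        (-(s : ℚ) / (a 0 : ℚ) ≤ (p.1 : ℚ) ∧ (p.1 : ℚ) ≤ (s : ℚ) / (a 1 : ℚ)) ∧
        (∑ i, (p.2 i : ℤ) * (b i).natAbs = (s : ℤ) - σw p.1 ∧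
          ∀ i, b i < 0 → p.2 i ≤ 1)} := by
  obtain rfl : b = mergeWeights a := hb
  change Set.BijOn (mergeExponentsEquiv d) _ _
  simpa only [monomialsOfWeight_natCast, mem_monomialsOfWeight_int, weightShift_int, ← hσw,
    ← neg_div_le_and_le_div_iff_zsmul (K := ℚ) h0 h1, Int.cast_natCast] using
    statement12_general h0.le h1.le (s : ℤ)
end

section
/- Let N and m be natural numbers with m ≤ N, let S be the multivariate polynomial ring over ℂ in N variables X_0, …, X_{N−1}, and let I ⊆ S be the ideal generated by the variables X_0, …, X_{m−1}. Then for every k ≥ 0, the Ext group Ext^k_S(S/I, S/I), computed in the abelian category of S-modules, is isomorphic (as an abelian group, equivalently as an S-module) to the direct sum of binomial(m, k) copies of S/I; in particular Ext^k_S(S/I, S/I) = 0 for k > m. -/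
open CategoryTheory

/-!
A variable not occurring in `I` is a nonzerodivisor on `S ⧸ I`, so multiplication by it on a free
resolution of `S ⧸ I` has a mapping cone which resolves the quotient by one more variable. Adding
the variables one at a time builds the Koszul resolution, whose ranks obey Pascal's rule. All its
differentials have image in `I • ⊤`, hence vanish after applying `Hom(-, M)` when `I` kills `M`,
and `Ext^k` is then `Hom` out of the `k`-th free module.
-/

open Module RingTheory.Sequence

universe u v

section ExtOfZeroDifferential

variable {R C : Type*} [Ring R] [Category* C] [Abelian C] [Linear R C] [EnoughProjectives C]
  {A Y : C} (P : ProjectiveResolution A)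

/-- If every morphism from a term of a projective resolution of `A` to `Y` kills the differential,
then `Ext^k(A, Y)` is the whole module of morphisms from the `k`-th term to `Y`. -/
noncomputable def extLinearEquivHomOfDComp
    (h : ∀ (n : ℕ) (φ : P.complex.X n ⟶ Y), P.complex.d (n + 1) n ≫ φ = 0) (k : ℕ) :
    ((Ext R C k).obj (Opposite.op A)).obj Y ≃ₗ[R] (P.complex.X k ⟶ Y) :=
  let K := P.complex.linearYonedaObj R Y
  have hK (i j : ℕ) : K.d i j = 0 := by
    by_cases hij : i + 1 = j
    · subst hij
      exact ModuleCat.hom_ext (LinearMap.ext (h i))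
    · exact K.shape i j hij
  (P.isoExt k Y ≪≫ (K.isoHomologyπ _ k rfl (hK _ _)).symm ≪≫
    K.iCyclesIso k _ rfl (hK _ _)).toLinearEquiv

end ExtOfZeroDifferential

section MulCone

variable {R M₀ M₁ M₂ M₃ : Type*} [CommRing R] [AddCommGroup M₀] [Module R M₀]
  [AddCommGroup M₁] [Module R M₁] [AddCommGroup M₂] [Module R M₂] [AddCommGroup M₃] [Module R M₃]

/-- The differential `(x, y) ↦ (f x + r • y, -g y)` of the mapping cone of multiplication by `r`
on a complex in which `f` is followed by `g`. -/
def mulConeMap (r : R) (f : M₂ →ₗ[R] M₁) (g : M₁ →ₗ[R] M₀) : M₂ × M₁ →ₗ[R] M₁ × M₀ :=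
  (f.coprod (LinearMap.lsmul R M₁ r)).prod (-(g ∘ₗ LinearMap.snd R M₂ M₁))

@[simp]
lemma mulConeMap_apply (r : R) (f : M₂ →ₗ[R] M₁) (g : M₁ →ₗ[R] M₀) (x : M₂ × M₁) :
    mulConeMap r f g x = (f x.1 + r • x.2, -g x.2) := rfl

variable {e : M₃ →ₗ[R] M₂} {f : M₂ →ₗ[R] M₁} {g : M₁ →ₗ[R] M₀}

lemma exact_mulConeMap (r : R) (hef : Function.Exact e f) (hfg : Function.Exact f g) :
    Function.Exact (mulConeMap r e f) (mulConeMap r f g) := by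
  rintro ⟨x, y⟩
  simp only [mulConeMap_apply, Prod.mk_eq_zero, neg_eq_zero, Set.mem_range, Prod.exists,
    Prod.mk.injEq]
  constructor
  · rintro ⟨hx, hy⟩
    obtain ⟨z, rfl⟩ := (hfg y).1 hy
    obtain ⟨w, hw⟩ := (hef (x + r • z)).1 (by rw [map_add, map_smul, hx])
    exact ⟨w, -z, by simp [hw], by simp⟩
  · rintro ⟨w, z, rfl, rfl⟩
    exact ⟨by simp [hef.apply_apply_eq_zero], by simp [hfg.apply_apply_eq_zero]⟩

lemma exact_mulConeMap_coprod {r : R} (hr : IsSMulRegular M₀ r) (hef : Function.Exact e f)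
    (hfg : Function.Exact f g) :
    Function.Exact (mulConeMap r e f) (f.coprod (LinearMap.lsmul R M₁ r)) := by
  intro x
  rw [← exact_mulConeMap r hef hfg x, mulConeMap_apply, Prod.mk_eq_zero]
  refine ⟨fun hx ↦ ⟨hx, ?_⟩, And.left⟩
  have hgx : r • g x.2 = 0 := by
    simpa [hfg.apply_apply_eq_zero] using congrArg g hx
  rw [hr.right_eq_zero_of_smul hgx, neg_zero]

lemma exact_coprod_lsmul_comp {N : Type*} [AddCommGroup N] [Module R N] {r : R} {q : M₀ →ₗ[R] N}
    (hfg : Function.Exact f g) (hg : Function.Surjective g)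
    (hq : Function.Exact (LinearMap.lsmul R M₀ r) q) :
    Function.Exact (f.coprod (LinearMap.lsmul R M₁ r)) (q ∘ₗ g) := by
  intro x
  constructor
  · intro hx
    obtain ⟨z, hz⟩ := (hq (g x)).1 hx
    obtain ⟨y, rfl⟩ := hg z
    obtain ⟨w, hw⟩ := (hfg (x - r • y)).1 (by simp [← hz])
    exact ⟨(w, y), by simp [hw]⟩
  · rintro ⟨⟨w, y⟩, rfl⟩
    simpa [hfg.apply_apply_eq_zero] using hq.apply_apply_eq_zero (g y)

variable {I : Ideal R} {r : R}

lemma range_coprod_lsmul_le_smul_top (hf : LinearMap.range f ≤ I • ⊤) (hr : r ∈ I) :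
    LinearMap.range (f.coprod (LinearMap.lsmul R M₁ r)) ≤ I • ⊤ := by
  rw [LinearMap.range_coprod]
  refine sup_le hf ?_
  rintro _ ⟨y, rfl⟩
  exact Submodule.smul_mem_smul hr trivial

lemma range_mulConeMap_le_smul_top (hf : LinearMap.range f ≤ I • ⊤)
    (hg : LinearMap.range g ≤ I • ⊤) (hr : r ∈ I) :
    LinearMap.range (mulConeMap r f g) ≤ I • ⊤ := by
  rintro _ ⟨x, rfl⟩
  have hfst : f x.1 + r • x.2 ∈ I • (⊤ : Submodule R M₁) :=
    range_coprod_lsmul_le_smul_top hf hr ⟨x, rfl⟩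
  have hsnd : -g x.2 ∈ I • (⊤ : Submodule R M₀) := neg_mem (hg ⟨x.2, rfl⟩)
  have hinl : (f x.1 + r • x.2, 0) ∈ I • (⊤ : Submodule R (M₁ × M₀)) :=
    Submodule.smul_top_le_comap_smul_top I (LinearMap.inl R M₁ M₀) hfst
  have hinr : (0, -g x.2) ∈ I • (⊤ : Submodule R (M₁ × M₀)) :=
    Submodule.smul_top_le_comap_smul_top I (LinearMap.inr R M₁ M₀) hsnd
  simpa using add_mem hinl hinr

end MulCone

/-- A resolution `⋯ → X 1 → X 0 → A → 0` of `A` by finite free modules, with chosen bases. The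
terms are bundled because they are built by recursion on the degree. -/
structure FiniteFreeResolution (R : Type u) [CommRing R] (A : Type u) [AddCommGroup A]
    [Module R A] where
  X : ℕ → ModuleCat.{u} R
  rank : ℕ → ℕ
  basis (n : ℕ) : Basis (Fin (rank n)) R (X n)
  d (n : ℕ) : X (n + 1) →ₗ[R] X n
  ε : X 0 →ₗ[R] A
  exact_d (n : ℕ) : Function.Exact (d (n + 1)) (d n)
  exact_ε : Function.Exact (d 0) ε
  surjective_ε : Function.Surjective ε

namespace FiniteFreeResolution

variable {R : Type u} [CommRing R] {A B : Type u} [AddCommGroup A] [Module R A]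
  [AddCommGroup B] [Module R B]

/-- Minimality of a resolution with respect to an ideal `I`: all differentials vanish modulo `I`.
For a local ring and its maximal ideal this is the usual notion. -/
def IsMinimal (P : FiniteFreeResolution R A) (I : Ideal R) : Prop :=
  ∀ n, LinearMap.range (P.d n) ≤ I • ⊤

section OfBasis

variable {k : ℕ} (b : Basis (Fin k) R A)

/-- The resolution of a finite free module by itself, concentrated in degree `0`. -/
noncomputable def ofBasis : FiniteFreeResolution R A where
  X
    | 0 => ModuleCat.of R A
    | _ + 1 => ModuleCat.of R PUnit
  rank
    | 0 => k
    | _ + 1 => 0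
  basis
    | 0 => b
    | _ + 1 => Basis.empty _
  d _ := 0
  ε := LinearMap.id
  exact_d _ _ := ⟨fun _ ↦ ⟨0, rfl⟩, fun _ ↦ rfl⟩
  exact_ε := LinearMap.exact_zero_iff_injective _ _ |>.2 Function.injective_id
  surjective_ε := Function.surjective_id

lemma ofBasis_isMinimal (I : Ideal R) : (ofBasis b).IsMinimal I := fun _ ↦
  LinearMap.range_zero.trans_le bot_le

end OfBasis

section MulCone

variable (P : FiniteFreeResolution R A) (r : R)

/-- The terms of the mapping cone of multiplication by `r` on a resolution. -/
def mulConeX : ℕ → ModuleCat.{u} R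
  | 0 => P.X 0
  | n + 1 => ModuleCat.of R (P.X (n + 1) × P.X n)

/-- The differentials of the mapping cone of multiplication by `r` on a resolution. -/
def mulConeD : ∀ n, P.mulConeX (n + 1) →ₗ[R] P.mulConeX n
  | 0 => (P.d 0).coprod (LinearMap.lsmul R (P.X 0) r)
  | n + 1 => mulConeMap r (P.d (n + 1)) (P.d n)

variable {r} {q : A →ₗ[R] B} (hr : IsSMulRegular A r)
  (hrq : Function.Exact (LinearMap.lsmul R A r) q) (hq : Function.Surjective q)

/-- Given a short exact sequence `0 → A → A → B → 0` whose first map is multiplication by `r`, the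
mapping cone of multiplication by `r` on a resolution of `A` is a resolution of `B`. -/
noncomputable def mulCone : FiniteFreeResolution R B where
  X := P.mulConeX
  rank
    | 0 => P.rank 0
    | n + 1 => P.rank (n + 1) + P.rank n
  basis
    | 0 => P.basis 0
    | n + 1 => ((P.basis (n + 1)).prod (P.basis n)).reindex finSumFinEquiv
  d := P.mulConeD r
  ε := q ∘ₗ P.ε
  exact_d
    | 0 => exact_mulConeMap_coprod hr (P.exact_d 0) P.exact_ε
    | n + 1 => exact_mulConeMap r (P.exact_d (n + 1)) (P.exact_d n)
  exact_ε := exact_coprod_lsmul_comp P.exact_ε P.surjective_ε hrq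
  surjective_ε := hq.comp P.surjective_ε

variable {P} in
lemma IsMinimal.mulCone {I J : Ideal R} (hP : P.IsMinimal I) (hIJ : I ≤ J) (hrJ : r ∈ J) :
    (P.mulCone hr hrq hq).IsMinimal J
  | 0 => range_coprod_lsmul_le_smul_top ((hP 0).trans (Submodule.smul_mono_left hIJ)) hrJ
  | n + 1 => range_mulConeMap_le_smul_top ((hP (n + 1)).trans (Submodule.smul_mono_left hIJ))
      ((hP n).trans (Submodule.smul_mono_left hIJ)) hrJ

lemma rank_mulCone {m : ℕ} (hP : ∀ n, P.rank n = m.choose n) (n : ℕ) :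
    (P.mulCone hr hrq hq).rank n = (m + 1).choose n := by
  cases n with
  | zero => exact (hP 0).trans (by simp)
  | succ n =>
    calc P.rank (n + 1) + P.rank n = m.choose n + m.choose (n + 1) := by rw [hP, hP, add_comm]
      _ = (m + 1).choose (n + 1) := (Nat.choose_succ_succ m n).symm

end MulCone

section ProjectiveResolution

variable (P : FiniteFreeResolution R A)

/-- The chain complex of a finite free resolution, without its augmentation. -/
noncomputable def complex : ChainComplex (ModuleCat.{u} R) ℕ :=
  ChainComplex.of P.X (fun n ↦ ModuleCat.ofHom (P.d n)) fun n ↦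
    ModuleCat.hom_ext (P.exact_d n).linearMap_comp_eq_zero

lemma complex_d (n : ℕ) : P.complex.d (n + 1) n = ModuleCat.ofHom (P.d n) :=
  ChainComplex.of_d P.X (fun n ↦ ModuleCat.ofHom (P.d n)) n

lemma complex_d_comp_ε : P.complex.d 1 0 ≫ ModuleCat.ofHom P.ε = 0 := by
  rw [complex_d]
  exact ModuleCat.hom_ext P.exact_ε.linearMap_comp_eq_zero

lemma complex_exactAt_succ (n : ℕ) : P.complex.ExactAt (n + 1) := by
  rw [HomologicalComplex.exactAt_iff' _ (n + 2) (n + 1) n (by simp) (by simp),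
    ShortComplex.ShortExact.moduleCat_exact_iff_function_exact]
  change Function.Exact (P.complex.d (n + 2) (n + 1)) (P.complex.d (n + 1) n)
  rw [complex_d, complex_d]
  exact P.exact_d n

lemma complex_exact_ε : (ShortComplex.mk _ _ P.complex_d_comp_ε).Exact := by
  rw [ShortComplex.ShortExact.moduleCat_exact_iff_function_exact]
  change Function.Exact (P.complex.d 1 0) P.ε
  rw [complex_d]
  exact P.exact_ε

lemma complex_projective (n : ℕ) : Projective (P.complex.X n) :=
  have : Module.Projective R (P.X n) := .of_basis (P.basis n)
  inferInstanceAs (Projective (P.X n))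

/-- The projective resolution, in the category of modules, given by a finite free resolution. -/
noncomputable def toProjectiveResolution : ProjectiveResolution (ModuleCat.of R A) where
  complex := P.complex
  projective := P.complex_projective
  π := (ChainComplex.toSingle₀Equiv _ _).symm ⟨ModuleCat.ofHom P.ε, P.complex_d_comp_ε⟩
  quasiIso := ⟨fun n ↦ by
    cases n with
    | zero =>
      rw [ChainComplex.quasiIsoAt₀_iff, ShortComplex.quasiIso_iff_of_zeros' _ rfl rfl rfl]
      have : Epi (ModuleCat.ofHom P.ε) := (ModuleCat.epi_iff_surjective _).2 P.surjective_ε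
      exact ⟨P.complex_exact_ε, this⟩
    | succ n =>
      rw [quasiIsoAt_iff_exactAt' _ _ (ChainComplex.exactAt_succ_single_obj _ _)]
      exact P.complex_exactAt_succ n⟩

end ProjectiveResolution

section Ext

variable {P : FiniteFreeResolution R A} {I : Ideal R} {M : Type u} [AddCommGroup M] [Module R M]

lemma IsMinimal.apply_d_eq_zero (hP : P.IsMinimal I) (hM : IsTorsionBySet R M I) (n : ℕ)
    (φ : P.X n →ₗ[R] M) (x : P.X (n + 1)) : φ (P.d n x) = 0 := by
  have hφ : φ (P.d n x) ∈ I • (⊤ : Submodule R M) :=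
    Submodule.smul_top_le_comap_smul_top I φ (hP n ⟨x, rfl⟩)
  have hIM : I • (⊤ : Submodule R M) = ⊥ := by
    rwa [← Submodule.le_annihilator_iff, Submodule.annihilator_top, ← SetLike.coe_subset_coe,
      ← isTorsionBySet_iff_subset_annihilator]
  rwa [hIM, Submodule.mem_bot] at hφ

/-- A resolution of `A` which is minimal with respect to `I` computes the `Ext` modules from `A`
to a module killed by `I`. -/
noncomputable def IsMinimal.extLinearEquiv (hP : P.IsMinimal I) (hM : IsTorsionBySet R M I)
    (k : ℕ) :
    ((Ext R (ModuleCat.{u} R) k).obj (Opposite.op (ModuleCat.of R A))).obj (ModuleCat.of R M) ≃ₗ[R]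
      (Fin (P.rank k) → M) :=
  extLinearEquivHomOfDComp P.toProjectiveResolution (fun n φ ↦ by
      change P.complex.d (n + 1) n ≫ φ = 0
      rw [complex_d]
      exact ModuleCat.hom_ext (LinearMap.ext (hP.apply_d_eq_zero hM n φ.hom))) k ≪≫ₗ
    ModuleCat.homLinearEquiv (S := R) (M := P.X k) (N := ModuleCat.of R M) ≪≫ₗ
    ((P.basis k).constr R).symm

end Ext

end FiniteFreeResolution

section WeaklyRegular

variable {R : Type u} [CommRing R]

lemma isWeaklyRegular_append_singleton_iff (rs : List R) (r : R) :
    IsWeaklyRegular R (rs ++ [r]) ↔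
      IsWeaklyRegular R rs ∧ IsSMulRegular (R ⧸ Ideal.ofList rs) r := by
  rw [isWeaklyRegular_append_iff, isWeaklyRegular_singleton_iff, smul_eq_mul, Ideal.mul_top]

lemma exact_lsmul_factor_sup_span_singleton (I : Ideal R) (r : R) :
    Function.Exact (LinearMap.lsmul R (R ⧸ I) r)
      (Submodule.factor (le_sup_left : I ≤ I ⊔ Ideal.span {r})) := by
  intro x
  obtain ⟨a, rfl⟩ := I.mkQ_surjective x
  have hmem : a ∈ I ⊔ Ideal.span {r} ↔ ∃ b, r * b - a ∈ I := by
    rw [sup_comm, Ideal.mem_span_singleton_sup]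
    constructor
    · rintro ⟨b, c, hc, rfl⟩
      exact ⟨b, by simpa [mul_comm] using hc⟩
    · rintro ⟨b, hb⟩
      exact ⟨b, a - r * b, by simpa using I.neg_mem hb, by ring⟩
  rw [Submodule.factor_mk, Submodule.mkQ_apply, Submodule.Quotient.mk_eq_zero, hmem, Set.mem_range,
    I.mkQ_surjective.exists]
  exact exists_congr fun b ↦ (Submodule.Quotient.eq I).symm

open FiniteFreeResolution in
theorem exists_finiteFreeResolution_of_isWeaklyRegular {rs : List R}
    (hrs : IsWeaklyRegular R rs) :
    ∃ P : FiniteFreeResolution R (R ⧸ Ideal.ofList rs),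
      (∀ n, P.rank n = rs.length.choose n) ∧ P.IsMinimal (Ideal.ofList rs) := by
  induction rs using List.reverseRecOn with
  | nil =>
    let b : Basis (Fin 1) R (R ⧸ (Ideal.ofList [] : Ideal R)) :=
      (Basis.singleton (Fin 1) R).map (Submodule.quotEquivOfEqBot _ Ideal.ofList_nil).symm
    refine ⟨ofBasis b, fun n ↦ ?_, ofBasis_isMinimal b _⟩
    cases n <;> rfl
  | append_singleton rs r ih =>
    obtain ⟨hrs, hr⟩ := (isWeaklyRegular_append_singleton_iff rs r).1 hrs
    obtain ⟨P, hrank, hmin⟩ := ih hrs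
    rw [Ideal.ofList_append, Ideal.ofList_singleton, List.length_append]
    have hrq := exact_lsmul_factor_sup_span_singleton (Ideal.ofList rs) r
    have hq := Submodule.factor_surjective
      (le_sup_left : Ideal.ofList rs ≤ Ideal.ofList rs ⊔ Ideal.span {r})
    exact ⟨P.mulCone hr hrq hq, P.rank_mulCone hr hrq hq hrank,
      hmin.mulCone hr hrq hq le_sup_left
        (Ideal.mem_sup_right (Ideal.mem_span_singleton_self r))⟩

theorem nonempty_ext_quotient_linearEquiv_of_isWeaklyRegular {rs : List R}
    (hrs : IsWeaklyRegular R rs) {M : Type u} [AddCommGroup M] [Module R M]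
    (hM : IsTorsionBySet R M (Ideal.ofList rs)) (k : ℕ) :
    Nonempty (((Ext R (ModuleCat.{u} R) k).obj
      (Opposite.op (ModuleCat.of R (R ⧸ Ideal.ofList rs)))).obj (ModuleCat.of R M) ≃ₗ[R]
        (Fin (rs.length.choose k) → M)) := by
  obtain ⟨P, hrank, hmin⟩ := exists_finiteFreeResolution_of_isWeaklyRegular hrs
  rw [← hrank]
  exact ⟨hmin.extLinearEquiv hM k⟩

end WeaklyRegular

section Variables

open MvPolynomial

variable {σ : Type v} (R : Type u) [CommRing R]

lemma isSMulRegular_X_quotient_span_X_image {s : Set σ} {i : σ} (hi : i ∉ s) :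
    IsSMulRegular (MvPolynomial σ R ⧸ Ideal.span (X '' s : Set (MvPolynomial σ R)))
      (X i : MvPolynomial σ R) := by
  classical
  rw [isSMulRegular_quotient_iff_mem_of_smul_mem]
  intro p hp
  rw [mem_ideal_span_X_image] at hp ⊢
  intro e he
  have hXe : Finsupp.single i 1 + e ∈ (X i * p).support := by
    rwa [MvPolynomial.mem_support_iff, coeff_X_mul, ← MvPolynomial.mem_support_iff]
  obtain ⟨j, hj, hne⟩ := hp _ hXe
  have hij : i ≠ j := fun h ↦ hi (h ▸ hj)
  exact ⟨j, hj, by simpa [Finsupp.single_apply, hij] using hne⟩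

lemma ofList_map_X (l : List σ) :
    Ideal.ofList (l.map (X : σ → MvPolynomial σ R)) = Ideal.span (X '' {i | i ∈ l}) := by
  simp only [Ideal.ofList, Set.image, List.mem_map, Set.mem_ofPred_eq]

lemma isWeaklyRegular_map_X {l : List σ} (hl : l.Nodup) :
    IsWeaklyRegular (MvPolynomial σ R) (l.map (X : σ → MvPolynomial σ R)) := by
  induction l using List.reverseRecOn with
  | nil => exact .nil _ _
  | append_singleton l i ih =>
    rw [List.nodup_append_comm, List.singleton_append, List.nodup_cons] at hl
    rw [List.map_append, List.map_singleton, isWeaklyRegular_append_singleton_iff, ofList_map_X]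
    exact ⟨ih hl.2, isSMulRegular_X_quotient_span_X_image R hl.1⟩

end Variables

theorem statement13_general {R : Type u} [CommRing R] {σ : Type v} {s : Set σ} {m : ℕ}
    (hs : s.encard = m) {I : Ideal (MvPolynomial σ R)} (hI : I = Ideal.span (MvPolynomial.X '' s))
    {M : Type (max u v)} [AddCommGroup M] [Module (MvPolynomial σ R) M]
    (hM : IsTorsionBySet (MvPolynomial σ R) M I) :
    (∀ k : ℕ,
      Nonempty
        (((Ext (MvPolynomial σ R) (ModuleCat (MvPolynomial σ R)) k).obj
            (Opposite.op (ModuleCat.of (MvPolynomial σ R) (MvPolynomial σ R ⧸ I)))).obj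
          (ModuleCat.of (MvPolynomial σ R) M) ≃ₗ[MvPolynomial σ R] (Fin (m.choose k) → M))) ∧
    (∀ k : ℕ, m < k →
      Subsingleton
        (((Ext (MvPolynomial σ R) (ModuleCat (MvPolynomial σ R)) k).obj
            (Opposite.op (ModuleCat.of (MvPolynomial σ R) (MvPolynomial σ R ⧸ I)))).obj
          (ModuleCat.of (MvPolynomial σ R) M))) := by
  lift s to Finset σ using Set.finite_of_encard_eq_coe hs
  have hcard : s.toList.length = m := by simpa using hs
  have hofList : Ideal.ofList (s.toList.map MvPolynomial.X) = I := by
    rw [hI, ofList_map_X]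
    simp
  have hExt := nonempty_ext_quotient_linearEquiv_of_isWeaklyRegular
    (isWeaklyRegular_map_X R s.nodup_toList) (M := M)
  rw [hofList, List.length_map, hcard] at hExt
  refine ⟨hExt hM, fun k hk ↦ ?_⟩
  obtain ⟨e⟩ := hExt hM k
  rw [Nat.choose_eq_zero_of_lt hk] at e
  exact e.toEquiv.subsingleton

lemma encard_fin_val_lt {N m : ℕ} (hm : m ≤ N) : {i : Fin N | (i : ℕ) < m}.encard = m := by
  have hfilter : {i : Fin N | (i : ℕ) < m} = ({i | (i : ℕ) < m} : Finset (Fin N)) := by simp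
  rw [hfilter, Set.encard_coe_eq_coe_finsetCard, Fin.card_filter_val_lt, min_eq_right hm]

/-- Let `S = ℂ[X₀, …, X_{N-1}]`, `m ≤ N`, and `I` the ideal generated by
`X₀, …, X_{m-1}`.  Then for every `k`, `Ext^k_S(S/I, S/I)` (in the abelian category of
`S`-modules) is isomorphic as an `S`-module to the direct sum of `binomial(m, k)` copies
of `S/I`; in particular it vanishes for `k > m`. -/
theorem statement13 (N m : ℕ) (hm : m ≤ N)
    (I : Ideal (MvPolynomial (Fin N) ℂ))
    (hI : I = Ideal.span ((fun i => MvPolynomial.X i) '' {i : Fin N | (i : ℕ) < m})) :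
    (∀ k : ℕ,
      Nonempty
        ((((Ext (MvPolynomial (Fin N) ℂ) (ModuleCat (MvPolynomial (Fin N) ℂ)) k).obj
            (Opposite.op (ModuleCat.of (MvPolynomial (Fin N) ℂ)
              (MvPolynomial (Fin N) ℂ ⧸ I)))).obj
          (ModuleCat.of (MvPolynomial (Fin N) ℂ) (MvPolynomial (Fin N) ℂ ⧸ I)) :
            ModuleCat (MvPolynomial (Fin N) ℂ)) ≃ₗ[MvPolynomial (Fin N) ℂ]
          (Fin (m.choose k) → MvPolynomial (Fin N) ℂ ⧸ I))) ∧
    (∀ k : ℕ, m < k →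
      Subsingleton
        ((((Ext (MvPolynomial (Fin N) ℂ) (ModuleCat (MvPolynomial (Fin N) ℂ)) k).obj
            (Opposite.op (ModuleCat.of (MvPolynomial (Fin N) ℂ)
              (MvPolynomial (Fin N) ℂ ⧸ I)))).obj
          (ModuleCat.of (MvPolynomial (Fin N) ℂ) (MvPolynomial (Fin N) ℂ ⧸ I)) :
            ModuleCat (MvPolynomial (Fin N) ℂ)))) := by
  exact statement13_general (encard_fin_val_lt hm) hI <|
    (isTorsionBySet_quotient_iff I I).2 fun x _ hr ↦ I.mul_mem_right x hr
end
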